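/- Let G = C_2 ∗ C_3, let G'' denote the second derived subgroup of G (the derived subgroup of the derived subgroup), and let H = PSL(2,5) × (G/G''). Then H is infinite, H is a homomorphic image of G (there is a surjective group homomorphism G → H), and there exists a generating pair (h1,h2) of H such that for every group homomorphism θ : G → H and every generating pair (g1,g2) of G one has (θ(g1), θ(g2)) ≠ (h1,h2). -/

import Mathlib

instance : Fact (Nat.Prime 5) := ⟨by norm_num⟩

instance (G : Type) [Group G] (n : ℕ) : (derivedSeries G n).Normal :=
  derivedSeries_normal G n

/-- `SL(2,F)` -/
abbrev SL2 (F : Type) [Field F] : Type := Matrix.SpecialLinearGroup (Fin 2) F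

/-- `PSL(2,F)`, the quotient of `SL(2,F)` by its centre `{±I}`. -/
abbrev PSL2 (F : Type) [Field F] : Type := SL2 F ⧸ Subgroup.center (SL2 F)

/-- The cyclic group of order `m`. -/
abbrev Cyc (m : ℕ) : Type := Multiplicative (ZMod m)

/-- `G = C_2 ∗ C_3`. -/
abbrev G0 : Type := Monoid.Coprod (Cyc 2) (Cyc 3)

/-- `H = PSL(2,5) × G/G''`, where `G''` is the second derived subgroup of `G`. -/
abbrev H0 : Type := PSL2 (ZMod 5) × (G0 ⧸ derivedSeries G0 2)

/-!
Lift the generators of `C_2 ∗ C_3` along a homomorphism to `PSL(2, R)` to matrices `A`, `B` of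
traces `0` and `1`, and put `z = tr (A * B)`. The trace of every word in `A` and `B` is a universal
integer polynomial in `z`; so is `F = tr ⁅X₁, X₂⁆` for words `X₁`, `X₂`, while
`tr ⁅A, B⁆ = z ^ 2 - 1`. If the two words generate `C_2 ∗ C_3`, then `A` and `B` lie in the algebra
generated by `X₁` and `X₂`, and there every commutator is a left multiple of `X₁ * X₂ - X₂ * X₁`.
Since `det (X * Y - Y * X) = 2 - tr ⁅X, Y⁆`, the integers `F - 2` and `z ^ 2 - 3` divide each other
for infinitely many integers `z`, which forces `F - 2 = ± (z ^ 2 - 3)`. At `z = -2` the negative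
sign would give a commutator of trace `1` in `SL(2, ℤ)`, which is impossible modulo `9`. Thus, over
any `R`, a generating pair of `C_2 ∗ C_3` maps to a pair with commutator trace `z ^ 2 - 1`.

In `SL(2, 5)` the transvections with entries `1` and `2` have commutator trace `1`, but
`z ^ 2 - 1 = 1` has no solution modulo `5`. As `PSL(2, 5)` is perfect and `G/G''` is solvable,
Goursat's lemma shows that subgroups of their product projecting onto both factors are everything,
so this pair extends to a generating pair of `H` which cannot lift. Finally `G/G''` is infinite
because `G` maps to the metabelian affine group of `ℂ` with an infinite-order translation in its
image.
-/

open Matrix Polynomial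
open scoped MatrixGroups commutatorElement

section Groups

variable {G A Q : Type*} [Group G] [Group A] [Group Q]

theorem commutatorElement_eq_of_mk_center_eq {x x' y y' : G}
    (hx : (x : G ⧸ Subgroup.center G) = x') (hy : (y : G ⧸ Subgroup.center G) = y') :
    ⁅x, y⁆ = ⁅x', y'⁆ := by
  have left_factor (c u v : G) (hc : c ∈ Subgroup.center G) : ⁅u * c, v⁆ = ⁅u, v⁆ := by
    have hc' := Subgroup.mem_center_iff.mp hc
    rw [commutatorElement_def, commutatorElement_def, mul_assoc u, ← hc' v]
    group
  have eq_mul {u u' : G} (h : (u : G ⧸ Subgroup.center G) = u') :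
      ∃ c ∈ Subgroup.center G, u * c = u' :=
    ⟨_, QuotientGroup.eq.mp h, mul_inv_cancel_left u u'⟩
  obtain ⟨c, hc, rfl⟩ := eq_mul hx
  obtain ⟨d, hd, rfl⟩ := eq_mul hy
  rw [left_factor c _ _ hc, ← commutatorElement_inv y, ← commutatorElement_inv (y * d),
    left_factor d _ _ hd]

theorem commute_map_of_closure_pair_eq_top (θ : G →* A) {a b : G}
    (htop : Subgroup.closure {a, b} = ⊤) (h : Commute (θ a) (θ b)) (x y : G) :
    Commute (θ x) (θ y) := by
  have hrange : θ.range = Subgroup.closure {θ a, θ b} := by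
    rw [MonoidHom.range_eq_map, ← htop, MonoidHom.map_closure, Set.image_pair]
  have mem (z : G) : θ z ∈ Subgroup.closure {θ a, θ b} := hrange ▸ ⟨z, rfl⟩
  have hle : Subgroup.closure {θ a, θ b} ≤ Subgroup.centralizer {θ a, θ b} := by
    rw [Subgroup.closure_le]
    rintro _ (rfl | rfl) _ (rfl | rfl)
    exacts [rfl, h.symm.eq, h.eq, rfl]
  exact Subgroup.mem_centralizer_iff.mp
    (Subgroup.closure_le_centralizer_centralizer _ (mem y)) _ (hle (mem x))

theorem derivedSeries_two_eq_bot {N : Type*} [CommGroup N] (f : G →* N)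
    (hf : ∀ x ∈ f.ker, ∀ y ∈ f.ker, Commute x y) : derivedSeries G 2 = ⊥ := by
  rw [derivedSeries_succ, derivedSeries_one, Subgroup.commutator_eq_bot_iff_le_centralizer]
  intro x hx y hy
  exact hf y (Abelianization.commutator_subset_ker f hy) x
    (Abelianization.commutator_subset_ker f hx)

theorem infinite_quotient_derivedSeries {n : ℕ} (hQ : derivedSeries Q n = ⊥) (f : G →* Q) {g : G}
    (hg : ¬IsOfFinOrder (f g)) : Infinite (G ⧸ derivedSeries G n) := by
  have hker : derivedSeries G n ≤ f.ker := by
    rw [← f.comap_bot, ← Subgroup.map_le_iff_le_comap, ← hQ]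
    exact map_derivedSeries_le_derivedSeries f n
  by_contra hfin
  rw [not_infinite_iff_finite] at hfin
  exact hg <| (QuotientGroup.lift _ f hker).isOfFinOrder <|
    isOfFinOrder_of_finite (g : G ⧸ derivedSeries G n)

instance isSolvable_quotient_derivedSeries (n : ℕ) [(derivedSeries G n).Normal] :
    Group.IsSolvable (G ⧸ derivedSeries G n) where
  solvable := ⟨n, by
    rw [← map_derivedSeries_eq (QuotientGroup.mk'_surjective _), QuotientGroup.map_mk'_self]⟩

theorem eq_top_of_isPerfect_of_isSolvable [Group.IsPerfect A] [Group.IsSolvable Q]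
    {K : Subgroup (A × Q)} (hA : K.map (MonoidHom.fst A Q) = ⊤)
    (hQ : K.map (MonoidHom.snd A Q) = ⊤) : K = ⊤ := by
  have hfst : Function.Surjective (Prod.fst ∘ K.subtype) := fun a ↦
    have ⟨k, hk, hka⟩ := hA.ge (Subgroup.mem_top a)
    ⟨⟨k, hk⟩, hka⟩
  have hsnd : Function.Surjective (Prod.snd ∘ K.subtype) := fun q ↦
    have ⟨k, hk, hkq⟩ := hQ.ge (Subgroup.mem_top q)
    ⟨⟨k, hk⟩, hkq⟩
  have := Subgroup.normal_goursatFst hfst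
  have := Subgroup.normal_goursatSnd hsnd
  obtain ⟨e, -⟩ := Subgroup.goursat_surjective hfst hsnd
  have hsolvable : Group.IsSolvable (A ⧸ K.goursatFst) :=
    Group.isSolvable_of_surjective (f := e.symm.toMonoidHom) e.symm.surjective
  have hA' : Subsingleton (A ⧸ K.goursatFst) := by
    by_contra h
    rw [not_subsingleton_iff_nontrivial] at h
    exact Group.IsPerfect.not_isSolvable _ hsolvable
  have hQ' : Subsingleton (Q ⧸ K.goursatSnd) := e.symm.toEquiv.subsingleton
  rw [QuotientGroup.subsingleton_iff] at hA' hQ'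
  simpa only [hA', hQ', Subgroup.top_prod_top, top_le_iff] using K.goursatFst_prod_goursatSnd_le

theorem closure_pair_mk_eq_top {N : Subgroup G} [N.Normal] {x y : G}
    (h : Subgroup.closure {x, y} = ⊤) : Subgroup.closure {(x : G ⧸ N), (y : G ⧸ N)} = ⊤ := by
  rw [← QuotientGroup.mk'_apply, ← QuotientGroup.mk'_apply, ← Set.image_pair,
    ← MonoidHom.map_closure, h, ← MonoidHom.range_eq_map, QuotientGroup.range_mk']

theorem closure_pair_prod_eq_top [Group.IsPerfect A] [Group.IsSolvable Q] {a₁ a₂ : A} {q₁ q₂ : Q}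
    (ha : Subgroup.closure {a₁, a₂} = ⊤) (hq : Subgroup.closure {q₁, q₂} = ⊤) :
    Subgroup.closure {(a₁, q₁), (a₂, q₂)} = ⊤ := by
  apply eq_top_of_isPerfect_of_isSolvable
  · rwa [MonoidHom.map_closure, Set.image_pair]
  · rwa [MonoidHom.map_closure, Set.image_pair]

theorem surjective_prod_of_isPerfect_of_isSolvable [Group.IsPerfect A] [Group.IsSolvable Q]
    {f : G →* A} {g : G →* Q} (hf : Function.Surjective f) (hg : Function.Surjective g) :
    Function.Surjective (f.prod g) := by
  rw [← MonoidHom.range_eq_top]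
  apply eq_top_of_isPerfect_of_isSolvable
  · rwa [MonoidHom.map_range, MonoidHom.fst_comp_prod, MonoidHom.range_eq_top]
  · rwa [MonoidHom.map_range, MonoidHom.snd_comp_prod, MonoidHom.range_eq_top]

end Groups

section Matrices

variable {R : Type*} [CommRing R]

theorem commutator_mul_self_left (X Y : Matrix (Fin 2) (Fin 2) R) :
    (X * Y - Y * X) * X = X.adjugate * (X * Y - Y * X) := by
  rw [X.eta_fin_two, Y.eta_fin_two, adjugate_fin_two_of]
  ext i j
  fin_cases i <;> fin_cases j <;> simp <;> ring

theorem commutator_mul_self_right (X Y : Matrix (Fin 2) (Fin 2) R) :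
    (X * Y - Y * X) * Y = Y.adjugate * (X * Y - Y * X) := by
  rw [← neg_sub, neg_mul, commutator_mul_self_left, mul_neg]

theorem exists_commutator_mul_eq_mul_commutator {X Y Z : Matrix (Fin 2) (Fin 2) R}
    (hZ : Z ∈ Algebra.adjoin R {X, Y}) :
    ∃ W, (X * Y - Y * X) * Z = W * (X * Y - Y * X) := by
  induction hZ using Algebra.adjoin_induction with
  | mem Z hZ =>
    obtain rfl | rfl := hZ
    exacts [⟨_, commutator_mul_self_left Z Y⟩, ⟨_, commutator_mul_self_right X Z⟩]
  | algebraMap r => exact ⟨_, (Algebra.commutes r _).symm⟩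
  | add Z₁ Z₂ _ _ ih₁ ih₂ =>
    obtain ⟨⟨W₁, h₁⟩, ⟨W₂, h₂⟩⟩ := ih₁, ih₂
    exact ⟨W₁ + W₂, by rw [mul_add, h₁, h₂, add_mul]⟩
  | mul Z₁ Z₂ _ _ ih₁ ih₂ =>
    obtain ⟨⟨W₁, h₁⟩, ⟨W₂, h₂⟩⟩ := ih₁, ih₂
    exact ⟨W₁ * W₂, by rw [← mul_assoc, h₁, mul_assoc, h₂, mul_assoc]⟩

theorem exists_commutator_eq_mul_commutator_of_generators {X Y A B : Matrix (Fin 2) (Fin 2) R}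
    (hX : ∃ W, A * X - X * A = W * (X * Y - Y * X))
    (hY : ∃ W, A * Y - Y * A = W * (X * Y - Y * X)) (hB : B ∈ Algebra.adjoin R {X, Y}) :
    ∃ W, A * B - B * A = W * (X * Y - Y * X) := by
  induction hB using Algebra.adjoin_induction with
  | mem B hB =>
    obtain rfl | rfl := hB
    exacts [hX, hY]
  | algebraMap r => exact ⟨0, by rw [zero_mul, sub_eq_zero, Algebra.commutes]⟩
  | add B₁ B₂ _ _ ih₁ ih₂ =>
    obtain ⟨⟨W₁, h₁⟩, ⟨W₂, h₂⟩⟩ := ih₁, ih₂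
    exact ⟨W₁ + W₂, by rw [add_mul W₁, ← h₁, ← h₂]; noncomm_ring⟩
  | mul B₁ B₂ _ hB₂ ih₁ ih₂ =>
    obtain ⟨⟨W₁, h₁⟩, ⟨W₂, h₂⟩⟩ := ih₁, ih₂
    obtain ⟨W, hW⟩ := exists_commutator_mul_eq_mul_commutator hB₂
    refine ⟨W₁ * W + B₁ * W₂, ?_⟩
    calc A * (B₁ * B₂) - B₁ * B₂ * A = (A * B₁ - B₁ * A) * B₂ + B₁ * (A * B₂ - B₂ * A) := by
          noncomm_ring
      _ = (W₁ * W + B₁ * W₂) * (X * Y - Y * X) := by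
          rw [h₁, h₂, mul_assoc, hW, add_mul, mul_assoc, mul_assoc]

theorem exists_commutator_eq_mul_commutator {X Y A B : Matrix (Fin 2) (Fin 2) R}
    (hA : A ∈ Algebra.adjoin R {X, Y}) (hB : B ∈ Algebra.adjoin R {X, Y}) :
    ∃ W, A * B - B * A = W * (X * Y - Y * X) := by
  have hA' {Z : Matrix (Fin 2) (Fin 2) R} (h : ∃ W, Z * A - A * Z = W * (X * Y - Y * X)) :
      ∃ W, A * Z - Z * A = W * (X * Y - Y * X) := by
    obtain ⟨W, hW⟩ := h
    exact ⟨-W, by rw [neg_mul, ← hW, neg_sub]⟩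
  refine exists_commutator_eq_mul_commutator_of_generators (hA' ?_) (hA' ?_) hB
  · exact exists_commutator_eq_mul_commutator_of_generators ⟨0, by simp⟩ ⟨1, by simp⟩ hA
  · exact exists_commutator_eq_mul_commutator_of_generators ⟨-1, by simp⟩ ⟨0, by simp⟩ hA

theorem det_commutator_dvd {X Y A B : Matrix (Fin 2) (Fin 2) R}
    (hA : A ∈ Algebra.adjoin R {X, Y}) (hB : B ∈ Algebra.adjoin R {X, Y}) :
    (X * Y - Y * X).det ∣ (A * B - B * A).det := by
  obtain ⟨W, hW⟩ := exists_commutator_eq_mul_commutator hA hB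
  exact ⟨W.det, by rw [hW, det_mul, mul_comm]⟩

end Matrices

section SpecialLinear

variable {R : Type*} [CommRing R]

theorem trace_commutatorElement (X Y : SL(2, R)) :
    (⁅X, Y⁆ : SL(2, R)).1.trace =
      X.1.trace ^ 2 + Y.1.trace ^ 2 + (X * Y).1.trace ^ 2
        - X.1.trace * Y.1.trace * (X * Y).1.trace - 2 := by
  have homogeneous (M N : Matrix (Fin 2) (Fin 2) R) :
      (M * N * M.adjugate * N.adjugate).trace =
        M.trace ^ 2 * N.det + N.trace ^ 2 * M.det + (M * N).trace ^ 2
          - M.trace * N.trace * (M * N).trace - 2 * M.det * N.det := by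
    rw [M.eta_fin_two, N.eta_fin_two]
    simp only [adjugate_fin_two_of, mul_fin_two, trace_fin_two_of, det_fin_two_of]
    ring
  simpa [commutatorElement_def] using homogeneous X.1 Y.1

theorem det_commutator (X Y : SL(2, R)) :
    (X.1 * Y.1 - Y.1 * X.1).det = 2 - (⁅X, Y⁆ : SL(2, R)).1.trace := by
  have homogeneous (M N : Matrix (Fin 2) (Fin 2) R) :
      (M * N - N * M).det = 2 * M.det * N.det - (M * N * M.adjugate * N.adjugate).trace := by
    simp only [det_fin_two, trace_fin_two, mul_apply, Fin.sum_univ_two, Matrix.sub_apply,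
      adjugate_fin_two, of_apply, cons_val_zero, cons_val_one, cons_val', cons_val_fin_one]
    ring
  simpa [commutatorElement_def] using homogeneous X.1 Y.1

theorem trace_commutatorElement_ne_one (X Y : SL(2, ℤ)) : (⁅X, Y⁆ : SL(2, ℤ)).1.trace ≠ 1 := by
  rw [trace_commutatorElement]
  generalize X.1.trace = x, Y.1.trace = y, (X * Y).1.trace = w
  intro h
  have no_solution_mod_nine : ∀ x y w : ZMod 9, x ^ 2 + y ^ 2 + w ^ 2 - x * y * w - 2 ≠ 1 := by
    decide
  exact no_solution_mod_nine x y w (by exact_mod_cast congrArg (Int.cast : ℤ → ZMod 9) h)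

/-- The subgroup of the elements of `SL(2, R)` lying in a subalgebra of the matrix algebra. It is
closed under inversion because `X⁻¹ = tr X - X`. -/
def specialLinearSubgroup (S : Subalgebra R (Matrix (Fin 2) (Fin 2) R)) : Subgroup SL(2, R) where
  carrier := {X | X.1 ∈ S}
  mul_mem' := fun hX hY ↦ S.mul_mem hX hY
  one_mem' := S.one_mem
  inv_mem' := by
    intro X hX
    have hinv : (X⁻¹).1 = algebraMap R _ X.1.trace - X.1 := by
      rw [Matrix.SpecialLinearGroup.coe_inv, adjugate_fin_two]
      ext i j
      fin_cases i <;> fin_cases j <;> simp [trace_fin_two, algebraMap_matrix_apply]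
    change (X⁻¹).1 ∈ S
    rw [hinv]
    exact S.sub_mem (S.algebraMap_mem _) hX

theorem center_le_specialLinearSubgroup (S : Subalgebra R (Matrix (Fin 2) (Fin 2) R)) :
    Subgroup.center SL(2, R) ≤ specialLinearSubgroup S := by
  intro X hX
  obtain ⟨r, -, hr⟩ := Matrix.SpecialLinearGroup.mem_center_iff.mp hX
  change X.1 ∈ S
  exact hr ▸ S.algebraMap_mem r

theorem mem_adjoin_of_closure_pair_eq_top {Γ : Type*} [Group Γ] (ρ : Γ →* PSL(2, R)) {g₁ g₂ h : Γ}
    (hg : Subgroup.closure {g₁, g₂} = ⊤) {X₁ X₂ A : SL(2, R)} (hX₁ : X₁ = ρ g₁) (hX₂ : X₂ = ρ g₂)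
    (hA : A = ρ h) : A.1 ∈ Algebra.adjoin R {X₁.1, X₂.1} := by
  set K := specialLinearSubgroup (Algebra.adjoin R {X₁.1, X₂.1})
  let π := QuotientGroup.mk' (Subgroup.center SL(2, R))
  have hgen : Subgroup.closure {g₁, g₂} ≤ (K.map π).comap ρ := by
    rw [Subgroup.closure_le]
    rintro _ (rfl | rfl)
    · exact ⟨X₁, Algebra.subset_adjoin (by simp), hX₁⟩
    · exact ⟨X₂, Algebra.subset_adjoin (by simp), hX₂⟩
  obtain ⟨Y, hY, hYA⟩ := hgen (hg ▸ Subgroup.mem_top h)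
  have hcenter : Y⁻¹ * A ∈ K := center_le_specialLinearSubgroup _ <|
    QuotientGroup.eq.mp (hYA.trans hA.symm)
  have hmem : A ∈ K := by simpa using K.mul_mem hY hcenter
  exact hmem

theorem trace_commutatorElement_sub_two_dvd {Γ : Type*} [Group Γ] (ρ : Γ →* PSL(2, R))
    {g₁ g₂ a b : Γ} (hg : Subgroup.closure {g₁, g₂} = ⊤) {X₁ X₂ A B : SL(2, R)}
    (hX₁ : X₁ = ρ g₁) (hX₂ : X₂ = ρ g₂) (hA : A = ρ a) (hB : B = ρ b) :
    (⁅X₁, X₂⁆ : SL(2, R)).1.trace - 2 ∣ (⁅A, B⁆ : SL(2, R)).1.trace - 2 := by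
  have hdvd := det_commutator_dvd (mem_adjoin_of_closure_pair_eq_top ρ hg hX₁ hX₂ hA)
    (mem_adjoin_of_closure_pair_eq_top ρ hg hX₁ hX₂ hB)
  rw [det_commutator, det_commutator] at hdvd
  rwa [← neg_dvd, ← dvd_neg, neg_sub, neg_sub]

end SpecialLinear

section Lifts

variable {R : Type*} [CommRing R]

theorem trace_sq_eq_four_of_mem_center {X : SL(2, R)} (hX : X ∈ Subgroup.center SL(2, R)) :
    X.1.trace ^ 2 = 4 := by
  obtain ⟨r, hr, hrX⟩ := Matrix.SpecialLinearGroup.mem_center_iff.mp hX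
  rw [Fintype.card_fin] at hr
  rw [← hrX, trace_fin_two]
  simp only [scalar_apply, diagonal_apply_eq]
  linear_combination 4 * hr

theorem coe_neg_eq_coe (X : SL(2, R)) : ((-X : SL(2, R)) : PSL(2, R)) = X := by
  have hcenter : (-1 : SL(2, R)) ∈ Subgroup.center SL(2, R) :=
    Subgroup.mem_center_iff.mpr fun Y ↦ by rw [mul_neg_one, neg_one_mul]
  rw [QuotientGroup.eq, inv_neg, neg_mul, inv_mul_cancel]
  exact hcenter

theorem coe_mul_self_eq (X : SL(2, R)) : X.1 * X.1 = X.1.trace • X.1 - 1 := by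
  have cayley_hamilton (M : Matrix (Fin 2) (Fin 2) R) : M * M = M.trace • M - M.det • 1 := by
    rw [M.eta_fin_two]
    ext i j
    fin_cases i <;> fin_cases j <;> simp [trace_fin_two_of, det_fin_two_of] <;> ring
  rw [cayley_hamilton, X.2, one_smul]

theorem coe_mul_self_mul_self_eq (X : SL(2, R)) :
    X.1 * X.1 * X.1 = (X.1.trace ^ 2 - 1) • X.1 - X.1.trace • 1 := by
  rw [coe_mul_self_eq, sub_mul, smul_mul_assoc, one_mul, coe_mul_self_eq]
  module

theorem coe_sq_eq_one_of_trace_eq_zero {A : SL(2, R)} (hA : A.1.trace = 0) :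
    (A : PSL(2, R)) ^ 2 = 1 := by
  have hsq : A ^ 2 = -1 := Subtype.ext <| by
    rw [sq]
    simp [coe_mul_self_eq, hA]
  rw [← QuotientGroup.mk_pow, hsq, coe_neg_eq_coe, QuotientGroup.mk_one]

theorem coe_cube_eq_one_of_trace_eq_one {B : SL(2, R)} (hB : B.1.trace = 1) :
    (B : PSL(2, R)) ^ 3 = 1 := by
  have hcube : B ^ 3 = -1 := Subtype.ext <| by
    rw [pow_three']
    simp [coe_mul_self_mul_self_eq, hB]
  rw [← QuotientGroup.mk_pow, hcube, coe_neg_eq_coe, QuotientGroup.mk_one]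

variable [IsDomain R]

theorem mem_center_of_smul_eq_scalar {X : SL(2, R)} {c e : R} (hc : c ≠ 0)
    (h : c • X.1 = scalar (Fin 2) e) : X ∈ Subgroup.center SL(2, R) := by
  have entry (i j : Fin 2) : c * X.1 i j = diagonal (fun _ ↦ e) i j := congrFun₂ h i j
  have h01 : X.1 0 1 = 0 := by simpa [hc] using entry 0 1
  have h10 : X.1 1 0 = 0 := by simpa [hc] using entry 1 0
  have h00 : X.1 0 0 = X.1 1 1 := mul_left_cancel₀ hc ((entry 0 0).trans (entry 1 1).symm)
  have hdet := X.2
  rw [det_fin_two, h01, h00, zero_mul, sub_zero] at hdet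
  refine Matrix.SpecialLinearGroup.mem_center_iff.mpr ⟨X.1 1 1, by simpa [sq] using hdet, ?_⟩
  ext i j
  fin_cases i <;> fin_cases j <;> simp [h00, h01, h10]

theorem trace_eq_zero_of_coe_sq_eq_one {A : SL(2, R)} (hA : (A : PSL(2, R)) ≠ 1)
    (hA2 : (A : PSL(2, R)) ^ 2 = 1) : A.1.trace = 0 := by
  rw [← QuotientGroup.mk_pow, QuotientGroup.eq_one_iff] at hA2
  obtain ⟨r, -, hr⟩ := Matrix.SpecialLinearGroup.mem_center_iff.mp hA2
  by_contra htrace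
  refine hA ((QuotientGroup.eq_one_iff A).mpr
    (mem_center_of_smul_eq_scalar (e := r + 1) htrace ?_))
  rw [map_add, hr, map_one, sq, Matrix.SpecialLinearGroup.coe_mul, coe_mul_self_eq,
    sub_add_cancel]

theorem trace_sq_eq_one_of_coe_cube_eq_one {B : SL(2, R)} (hB : (B : PSL(2, R)) ≠ 1)
    (hB3 : (B : PSL(2, R)) ^ 3 = 1) : B.1.trace ^ 2 = 1 := by
  rw [← QuotientGroup.mk_pow, QuotientGroup.eq_one_iff] at hB3
  obtain ⟨r, -, hr⟩ := Matrix.SpecialLinearGroup.mem_center_iff.mp hB3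
  by_contra htrace
  refine hB ((QuotientGroup.eq_one_iff B).mpr
    (mem_center_of_smul_eq_scalar (e := r + B.1.trace) (sub_ne_zero.mpr htrace) ?_))
  rw [map_add, hr, pow_three', Matrix.SpecialLinearGroup.coe_mul, Matrix.SpecialLinearGroup.coe_mul,
    coe_mul_self_mul_self_eq, scalar_apply, ← smul_one_eq_diagonal, sub_add_cancel]

theorem exists_lift_trace_eq_one {x : PSL(2, R)} (hx : x ≠ 1) (hx3 : x ^ 3 = 1) :
    ∃ B : SL(2, R), (B : PSL(2, R)) = x ∧ B.1.trace = 1 := by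
  obtain ⟨B, rfl⟩ := QuotientGroup.mk_surjective x
  obtain h | h := sq_eq_one_iff.mp (trace_sq_eq_one_of_coe_cube_eq_one hx hx3)
  · exact ⟨B, rfl, h⟩
  · exact ⟨-B, coe_neg_eq_coe B, by simp [h]⟩

end Lifts

section Modular

/-- The image in `C_2 ∗ C_3` of the standard generator of `C_2`. -/
def genTwo : G0 := Monoid.Coprod.inl (Multiplicative.ofAdd 1)

/-- The image in `C_2 ∗ C_3` of the standard generator of `C_3`. -/
def genThree : G0 := Monoid.Coprod.inr (Multiplicative.ofAdd 1)

theorem Cyc.ofAdd_one_pow_val {n : ℕ} [NeZero n] (x : Cyc n) :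
    (Multiplicative.ofAdd 1 : Cyc n) ^ x.toAdd.val = x := by
  rw [← ofAdd_nsmul, nsmul_one, ZMod.natCast_zmod_val, ofAdd_toAdd]

theorem Cyc.exists_hom {K : Type*} [Group K] {n : ℕ} {k : K} (hk : k ^ n = 1) :
    ∃ f : Cyc n →* K, f (Multiplicative.ofAdd 1) = k := by
  let f : {f : ℤ →+ Additive K // f n = 0} :=
    ⟨zmultiplesHom (Additive K) (Additive.ofMul k), by
      rw [zmultiplesHom_apply, natCast_zsmul, ← ofMul_pow, hk, ofMul_one]⟩
  refine ⟨(ZMod.lift n f).toMultiplicativeLeft, ?_⟩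
  have hone : ZMod.lift n f 1 = Additive.ofMul k := by
    rw [← Int.cast_one, ZMod.lift_coe, zmultiplesHom_apply, one_zsmul]
  exact congrArg Additive.toMul hone

theorem exists_hom_genTwo_genThree {K : Type*} [Group K] {k l : K} (hk : k ^ 2 = 1)
    (hl : l ^ 3 = 1) : ∃ f : G0 →* K, f genTwo = k ∧ f genThree = l := by
  obtain ⟨f, hf⟩ := Cyc.exists_hom hk
  obtain ⟨g, hg⟩ := Cyc.exists_hom hl
  refine ⟨Monoid.Coprod.lift f g, ?_, ?_⟩
  · rw [genTwo, Monoid.Coprod.lift_apply_inl, hf]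
  · rw [genThree, Monoid.Coprod.lift_apply_inr, hg]

theorem genTwo_sq : genTwo ^ 2 = 1 := by
  rw [genTwo, ← map_pow, ← ofAdd_nsmul, nsmul_one, ZMod.natCast_self, ofAdd_zero, map_one]

theorem genThree_cube : genThree ^ 3 = 1 := by
  rw [genThree, ← map_pow, ← ofAdd_nsmul, nsmul_one, ZMod.natCast_self, ofAdd_zero, map_one]

theorem submonoid_closure_genTwo_genThree : Submonoid.closure {genTwo, genThree} = ⊤ := by
  rw [Submonoid.eq_top_iff']
  intro g
  induction g using Monoid.Coprod.induction_on with
  | inl x =>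
    have hmem : genTwo ∈ Submonoid.closure {genTwo, genThree} :=
      Submonoid.subset_closure (Set.mem_insert _ _)
    simpa only [genTwo, ← map_pow, Cyc.ofAdd_one_pow_val] using pow_mem hmem x.toAdd.val
  | inr x =>
    have hmem : genThree ∈ Submonoid.closure {genTwo, genThree} :=
      Submonoid.subset_closure (Set.mem_insert_of_mem _ rfl)
    simpa only [genThree, ← map_pow, Cyc.ofAdd_one_pow_val] using pow_mem hmem x.toAdd.val
  | mul x y hx hy => exact Submonoid.mul_mem _ hx hy

theorem closure_genTwo_genThree : Subgroup.closure {genTwo, genThree} = ⊤ :=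
  Subgroup.closure_eq_top_of_mclosure_eq_top submonoid_closure_genTwo_genThree

theorem exists_hom_PSL {R : Type*} [CommRing R] {A B : SL(2, R)} (hA : A.1.trace = 0)
    (hB : B.1.trace = 1) :
    ∃ ρ : G0 →* PSL(2, R), ρ genTwo = A ∧ ρ genThree = B :=
  exists_hom_genTwo_genThree (coe_sq_eq_one_of_trace_eq_zero hA)
    (coe_cube_eq_one_of_trace_eq_one hB)

end Modular

section Words

/-- Evaluation of words in two letters at a pair of elements of a monoid. Positive words suffice
to express all elements of `C_2 ∗ C_3`, whose generators have finite order. -/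
abbrev evalWord {M : Type*} [Monoid M] (x y : M) : FreeMonoid (Fin 2) →* M :=
  FreeMonoid.lift ![x, y]

theorem map_evalWord {M N : Type*} [Monoid M] [Monoid N] (f : M →* N) (x y : M)
    (w : FreeMonoid (Fin 2)) : f (evalWord x y w) = evalWord (f x) (f y) w := by
  have hcomp : f ∘ ![x, y] = ![f x, f y] := by
    ext i
    fin_cases i <;> rfl
  rw [FreeMonoid.hom_map_lift, hcomp]

theorem evalWord_genTwo_genThree_surjective :
    Function.Surjective (evalWord genTwo genThree) := by
  rw [← MonoidHom.mrange_eq_top, FreeMonoid.mrange_lift, range_cons_cons_empty]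
  exact submonoid_closure_genTwo_genThree

theorem coe_evalWord_eq_map {R : Type*} [CommRing R] {A B : SL(2, R)} {θ : G0 →* PSL(2, R)}
    (hA : θ genTwo = A) (hB : θ genThree = B) (w : FreeMonoid (Fin 2)) :
    (evalWord A B w : PSL(2, R)) = θ (evalWord genTwo genThree w) := by
  rw [map_evalWord, hA, hB]
  exact map_evalWord (QuotientGroup.mk' _) A B w

end Words

section TracePolynomials

theorem mul_add_mul_eq {R : Type*} [CommRing R] (X Y : Matrix (Fin 2) (Fin 2) R) :
    X * Y + Y * X =
      X.trace • Y + Y.trace • X + ((X * Y).trace - X.trace * Y.trace) • 1 := by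
  rw [X.eta_fin_two, Y.eta_fin_two]
  ext i j
  fin_cases i <;> fin_cases j <;> simp [trace_fin_two_of] <;> ring

theorem mul_coordinates_of_trace_eq_zero {R : Type*} [CommRing R] {A : SL(2, R)}
    (hA : A.1.trace = 0) (B : SL(2, R)) (p q r s : R) :
    A.1 * (p • 1 + q • A.1 + r • B.1 + s • (A.1 * B.1)) =
      -q • 1 + p • A.1 + -s • B.1 + r • (A.1 * B.1) := by
  have hAA : A.1 * A.1 = -1 := by rw [coe_mul_self_eq, hA, zero_smul, zero_sub]
  simp only [mul_add, mul_smul_comm, ← mul_assoc, hAA, mul_one, neg_mul, one_mul]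
  module

theorem mul_coordinates_of_trace_eq_one {R : Type*} [CommRing R] {A B : SL(2, R)}
    (hA : A.1.trace = 0) (hB : B.1.trace = 1) (p q r s : R) :
    B.1 * (p • 1 + q • A.1 + r • B.1 + s • (A.1 * B.1)) =
      ((A * B).1.trace * q - r) • 1 + (q + s) • A.1 + (p + r + (A * B).1.trace * s) • B.1
        + -q • (A.1 * B.1) := by
  have hBB : B.1 * B.1 = B.1 - 1 := by rw [coe_mul_self_eq, hB, one_smul]
  have hBA : B.1 * A.1 = A.1 + (A * B).1.trace • 1 - A.1 * B.1 := by
    rw [eq_sub_iff_add_eq', mul_add_mul_eq, hA, hB, zero_smul, one_smul, zero_add, zero_mul,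
      sub_zero, Matrix.SpecialLinearGroup.coe_mul]
  have hBAB : B.1 * (A.1 * B.1) = A.1 + (A * B).1.trace • B.1 := by
    rw [← mul_assoc, hBA, sub_mul, add_mul, mul_assoc, hBB, mul_sub, mul_one, smul_mul_assoc,
      one_mul]
    abel
  simp only [mul_add, mul_smul_comm, hBB, hBA, hBAB, mul_one]
  module

theorem exists_word_coordinates (w : FreeMonoid (Fin 2)) :
    ∃ p q r s : ℤ[X], ∀ {R : Type*} [CommRing R] {A B : SL(2, R)}, A.1.trace = 0 →
      B.1.trace = 1 → (evalWord A B w).1 =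
        aeval (A * B).1.trace p • 1 + aeval (A * B).1.trace q • A.1
          + aeval (A * B).1.trace r • B.1 + aeval (A * B).1.trace s • (A.1 * B.1) := by
  induction w using FreeMonoid.inductionOn' with
  | one => exact ⟨1, 0, 0, 0, by simp⟩
  | of_mul i w ih =>
    obtain ⟨p, q, r, s, ih⟩ := ih
    fin_cases i
    · refine ⟨-q, p, -s, r, fun {R} _ {A B} hA hB ↦ ?_⟩
      have hword : evalWord A B (FreeMonoid.of 0 * w) = A * evalWord A B w := map_mul ..
      rw [Fin.zero_eta, hword, Matrix.SpecialLinearGroup.coe_mul A, ih hA hB,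
        mul_coordinates_of_trace_eq_zero hA, map_neg, map_neg]
    · refine ⟨X * q - r, q + s, p + r + X * s, -q, fun {R} _ {A B} hA hB ↦ ?_⟩
      have hword : evalWord A B (FreeMonoid.of 1 * w) = B * evalWord A B w := map_mul ..
      rw [Fin.mk_one, hword, Matrix.SpecialLinearGroup.coe_mul B, ih hA hB,
        mul_coordinates_of_trace_eq_one hA hB]
      simp only [map_sub, map_add, map_mul, map_neg, aeval_X]

theorem exists_trace_polynomial (w : FreeMonoid (Fin 2)) :
    ∃ P : ℤ[X], ∀ {R : Type*} [CommRing R] {A B : SL(2, R)}, A.1.trace = 0 → B.1.trace = 1 →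
      (evalWord A B w).1.trace = aeval (A * B).1.trace P := by
  obtain ⟨p, q, r, s, h⟩ := exists_word_coordinates w
  refine ⟨2 * p + r + X * s, fun {R} _ {A B} hA hB ↦ ?_⟩
  rw [h hA hB, ← Matrix.SpecialLinearGroup.coe_mul]
  simp only [trace_add, trace_smul, trace_one, Fintype.card_fin, hA, hB, map_add, map_mul,
    map_ofNat, aeval_X, smul_eq_mul, Nat.cast_ofNat]
  ring

theorem exists_trace_commutatorElement_polynomial (v w : FreeMonoid (Fin 2)) :
    ∃ F : ℤ[X], ∀ {R : Type*} [CommRing R] {A B : SL(2, R)}, A.1.trace = 0 → B.1.trace = 1 →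
      (⁅evalWord A B v, evalWord A B w⁆ : SL(2, R)).1.trace = aeval (A * B).1.trace F := by
  obtain ⟨P, hP⟩ := exists_trace_polynomial v
  obtain ⟨Q, hQ⟩ := exists_trace_polynomial w
  obtain ⟨T, hT⟩ := exists_trace_polynomial (v * w)
  refine ⟨P ^ 2 + Q ^ 2 + T ^ 2 - P * Q * T - 2, fun {R} _ {A B} hA hB ↦ ?_⟩
  rw [trace_commutatorElement, ← map_mul, hP hA hB, hQ hA hB, hT hA hB]
  simp only [map_sub, map_add, map_mul, map_pow, map_ofNat]

end TracePolynomials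

section CommutatorTrace

theorem trace_commutatorElement_of_trace_eq {R : Type*} [CommRing R] {A B : SL(2, R)}
    (hA : A.1.trace = 0) (hB : B.1.trace = 1) :
    (⁅A, B⁆ : SL(2, R)).1.trace = (A * B).1.trace ^ 2 - 1 := by
  rw [trace_commutatorElement, hA, hB]
  ring

/-- The rotation by a right angle: trace `0`, hence of order `2` in `PSL(2, R)`. -/
def rotationMatrix (R : Type*) [CommRing R] : SL(2, R) :=
  ⟨!![0, -1; 1, 0], by simp [det_fin_two_of]⟩

/-- A family of matrices of trace `1`, hence of order `3` in `PSL(2, R)`, chosen so that the trace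
of `rotationMatrix R * orderThreeMatrix s` takes infinitely many values over `ℤ`. -/
def orderThreeMatrix {R : Type*} [CommRing R] (s : R) : SL(2, R) :=
  ⟨!![-s, -1; s ^ 2 + s + 1, s + 1], by rw [det_fin_two_of]; ring⟩

theorem trace_rotationMatrix {R : Type*} [CommRing R] : (rotationMatrix R).1.trace = 0 := by
  simp [rotationMatrix, trace_fin_two_of]

theorem trace_orderThreeMatrix {R : Type*} [CommRing R] (s : R) :
    (orderThreeMatrix s).1.trace = 1 := by
  simp [orderThreeMatrix, trace_fin_two_of]

theorem trace_rotationMatrix_mul_orderThreeMatrix {R : Type*} [CommRing R] (s : R) :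
    (rotationMatrix R * orderThreeMatrix s).1.trace = -(s ^ 2 + s + 2) := by
  rw [Matrix.SpecialLinearGroup.coe_mul, rotationMatrix, orderThreeMatrix, mul_fin_two,
    trace_fin_two_of]
  ring

theorem infinite_range_trace_rotationMatrix_mul_orderThreeMatrix :
    (Set.range fun s : ℤ ↦ (rotationMatrix ℤ * orderThreeMatrix s).1.trace).Infinite := by
  refine Set.infinite_of_injective_forall_mem (f := fun n : ℕ ↦
    (rotationMatrix ℤ * orderThreeMatrix (n : ℤ)).1.trace) (fun m n hmn ↦ ?_) fun n ↦ ⟨n, rfl⟩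
  simp only [trace_rotationMatrix_mul_orderThreeMatrix, neg_inj] at hmn
  have hfactor : ((m : ℤ) - n) * (m + n + 1) = 0 := by linear_combination hmn
  have hpos : (m : ℤ) + n + 1 ≠ 0 := by positivity
  exact_mod_cast sub_eq_zero.mp ((mul_eq_zero.mp hfactor).resolve_right hpos)

variable {v w : FreeMonoid (Fin 2)}

theorem associated_trace_commutatorElement_sub_two {R : Type*} [CommRing R] [IsDomain R]
    (hvw : Subgroup.closure {evalWord genTwo genThree v, evalWord genTwo genThree w} = ⊤)
    {A B : SL(2, R)} (hA : A.1.trace = 0) (hB : B.1.trace = 1) :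
    Associated ((⁅evalWord A B v, evalWord A B w⁆ : SL(2, R)).1.trace - 2)
      ((⁅A, B⁆ : SL(2, R)).1.trace - 2) := by
  obtain ⟨ρ, hρA, hρB⟩ := exists_hom_PSL hA hB
  have hv := coe_evalWord_eq_map hρA hρB v
  have hw := coe_evalWord_eq_map hρA hρB w
  exact associated_of_dvd_dvd
    (trace_commutatorElement_sub_two_dvd ρ hvw hv hw hρA.symm hρB.symm)
    (trace_commutatorElement_sub_two_dvd ρ closure_genTwo_genThree hρA.symm hρB.symm hv hw)

theorem trace_commutatorElement_evalWord
    (hvw : Subgroup.closure {evalWord genTwo genThree v, evalWord genTwo genThree w} = ⊤)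
    {R : Type} [CommRing R] {A B : SL(2, R)} (hA : A.1.trace = 0) (hB : B.1.trace = 1) :
    (⁅evalWord A B v, evalWord A B w⁆ : SL(2, R)).1.trace = (A * B).1.trace ^ 2 - 1 := by
  obtain ⟨F, hF⟩ := exists_trace_commutatorElement_polynomial v w
  have hF_int (s : ℤ) := hF (trace_rotationMatrix (R := ℤ)) (trace_orderThreeMatrix s)
  have hsq : (F - 2) ^ 2 = (X ^ 2 - 3) ^ 2 := by
    refine eq_of_infinite_eval_eq _ _
      (infinite_range_trace_rotationMatrix_mul_orderThreeMatrix.mono ?_)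
    rintro _ ⟨s, rfl⟩
    have hassoc := associated_trace_commutatorElement_sub_two hvw
      (trace_rotationMatrix (R := ℤ)) (trace_orderThreeMatrix s)
    rw [hF_int, trace_commutatorElement_of_trace_eq trace_rotationMatrix
      (trace_orderThreeMatrix s), Int.associated_iff_natAbs, Int.natAbs_eq_natAbs_iff,
      ← sq_eq_sq_iff_eq_or_eq_neg, coe_aeval_eq_eval] at hassoc
    simp only [Set.mem_ofPred_eq, eval_pow, eval_sub, eval_X, eval_ofNat]
    linear_combination hassoc
  have hF_eq : F = X ^ 2 - 1 := by
    obtain h | h := sq_eq_sq_iff_eq_or_eq_neg.mp hsq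
    · linear_combination h
    · have heval : F.eval (-2) = 1 := by
        rw [eq_add_of_sub_eq h]
        norm_num
      have hz : (rotationMatrix ℤ * orderThreeMatrix 0).1.trace = -2 := by
        rw [trace_rotationMatrix_mul_orderThreeMatrix]
        norm_num
      refine absurd ((hF_int 0).trans ?_) (trace_commutatorElement_ne_one _ _)
      rw [hz, coe_aeval_eq_eval, heval]
  rw [hF hA hB, hF_eq, map_sub, map_pow, aeval_X, map_one]

theorem exists_trace_commutatorElement_eq_sq_sub_one {K : Type} [CommRing K] [IsDomain K]
    (θ : G0 →* PSL(2, K)) {g₁ g₂ : G0} (hg : Subgroup.closure {g₁, g₂} = ⊤) {Y₁ Y₂ : SL(2, K)}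
    (hY₁ : Y₁ = θ g₁) (hY₂ : Y₂ = θ g₂) (hY : (⁅Y₁, Y₂⁆ : SL(2, K)).1.trace ^ 2 ≠ 4) :
    ∃ z, (⁅Y₁, Y₂⁆ : SL(2, K)).1.trace = z ^ 2 - 1 := by
  have hnot_commute : ¬Commute (θ genTwo) (θ genThree) := fun h ↦ hY <| by
    refine trace_sq_eq_four_of_mem_center ((QuotientGroup.eq_one_iff _).mp ?_)
    have hcomm : ⁅(Y₁ : PSL(2, K)), (Y₂ : PSL(2, K))⁆ = 1 := by
      rw [hY₁, hY₂, commutatorElement_eq_one_iff_commute]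
      exact commute_map_of_closure_pair_eq_top θ closure_genTwo_genThree h g₁ g₂
    rw [← hcomm]
    exact map_commutatorElement (QuotientGroup.mk' _) Y₁ Y₂
  have hθa : θ genTwo ≠ 1 := fun h ↦ hnot_commute (h ▸ Commute.one_left _)
  have hθb : θ genThree ≠ 1 := fun h ↦ hnot_commute (h ▸ Commute.one_right _)
  obtain ⟨A, hA⟩ := QuotientGroup.mk_surjective (θ genTwo)
  have hA_trace : A.1.trace = 0 := trace_eq_zero_of_coe_sq_eq_one (hA ▸ hθa) <| by
    rw [hA, ← map_pow, genTwo_sq, map_one]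
  obtain ⟨B, hB, hB_trace⟩ := exists_lift_trace_eq_one hθb <| by
    rw [← map_pow, genThree_cube, map_one]
  obtain ⟨v, rfl⟩ := evalWord_genTwo_genThree_surjective g₁
  obtain ⟨w, rfl⟩ := evalWord_genTwo_genThree_surjective g₂
  refine ⟨(A * B).1.trace, ?_⟩
  rw [commutatorElement_eq_of_mk_center_eq
    (hY₁.trans (coe_evalWord_eq_map hA.symm hB.symm v).symm)
    (hY₂.trans (coe_evalWord_eq_map hA.symm hB.symm w).symm),
    trace_commutatorElement_evalWord hg hA_trace hB_trace]

end CommutatorTrace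

section Generation

theorem transvection_pow {n R : Type*} [Fintype n] [DecidableEq n] [CommRing R] {i j : n}
    (hij : i ≠ j) (b : R) (k : ℕ) :
    Matrix.SpecialLinearGroup.transvection hij b ^ k =
      Matrix.SpecialLinearGroup.transvection hij (k * b) := by
  induction k with
  | zero => ext; simp
  | succ k ih =>
    rw [pow_succ, ih, ← Matrix.SpecialLinearGroup.transvection_add, Nat.cast_succ, add_one_mul]

/-- The elementary matrix with rows `(1, b)` and `(0, 1)`. -/
abbrev upperTransvection {R : Type*} [CommRing R] (b : R) : SL(2, R) :=
  Matrix.SpecialLinearGroup.transvection (zero_ne_one' (Fin 2)) b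

/-- The elementary matrix with rows `(1, 0)` and `(c, 1)`. -/
abbrev lowerTransvection {R : Type*} [CommRing R] (c : R) : SL(2, R) :=
  Matrix.SpecialLinearGroup.transvection (one_ne_zero' (Fin 2)) c

theorem coe_upperTransvection {R : Type*} [CommRing R] (b : R) :
    (upperTransvection b).1 = !![1, b; 0, 1] := by
  ext i j
  fin_cases i <;> fin_cases j <;> simp [Matrix.SpecialLinearGroup.transvection_coe]

theorem coe_lowerTransvection {R : Type*} [CommRing R] (c : R) :
    (lowerTransvection c).1 = !![1, 0; c, 1] := by
  ext i j
  fin_cases i <;> fin_cases j <;> simp [Matrix.SpecialLinearGroup.transvection_coe]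

theorem trace_commutatorElement_transvection {R : Type*} [CommRing R] (b c : R) :
    (⁅upperTransvection b, lowerTransvection c⁆ : SL(2, R)).1.trace = 2 + (b * c) ^ 2 := by
  rw [trace_commutatorElement, Matrix.SpecialLinearGroup.coe_mul, coe_upperTransvection,
    coe_lowerTransvection, mul_fin_two, trace_fin_two_of, trace_fin_two_of, trace_fin_two_of]
  ring

variable {p : ℕ} [Fact p.Prime]

theorem closure_transvection_pair_eq_top {b c : ZMod p} (hb : b ≠ 0) (hc : c ≠ 0) :
    Subgroup.closure {upperTransvection b, lowerTransvection c} = ⊤ := by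
  set K := Subgroup.closure {upperTransvection b, lowerTransvection c}
  have multiple_mem {i j : Fin 2} (hij : i ≠ j) {d : ZMod p} (hd : d ≠ 0)
      (hK : Matrix.SpecialLinearGroup.transvection hij d ∈ K) (e : ZMod p) :
      Matrix.SpecialLinearGroup.transvection hij e ∈ K := by
    have hpow := K.pow_mem hK (e / d).val
    rwa [transvection_pow, ZMod.natCast_zmod_val, div_mul_cancel₀ e hd] at hpow
  rw [Subgroup.eq_top_iff']
  refine Matrix.SL2.transvection_induction _ (fun i j hij e ↦ ?_) fun _ _ ↦ K.mul_mem
  obtain ⟨rfl, rfl⟩ | ⟨rfl, rfl⟩ : i = 0 ∧ j = 1 ∨ i = 1 ∧ j = 0 := by lia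
  · exact multiple_mem hij hb (Subgroup.subset_closure (Set.mem_insert _ _)) e
  · exact multiple_mem hij hc (Subgroup.subset_closure (Set.mem_insert_of_mem _ rfl)) e

theorem closure_rotationMatrix_orderThreeMatrix_eq_top :
    Subgroup.closure {rotationMatrix (ZMod p), orderThreeMatrix 0} = ⊤ := by
  have upper : upperTransvection (1 : ZMod p) =
      (rotationMatrix (ZMod p))⁻¹ * orderThreeMatrix 0 := by
    refine Subtype.ext ?_
    rw [Matrix.SpecialLinearGroup.coe_mul, Matrix.SpecialLinearGroup.coe_inv]
    simp [coe_upperTransvection, rotationMatrix, orderThreeMatrix, adjugate_fin_two_of]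
  have lower : lowerTransvection (1 : ZMod p) =
      rotationMatrix (ZMod p) * (orderThreeMatrix 0)⁻¹ := by
    refine Subtype.ext ?_
    rw [Matrix.SpecialLinearGroup.coe_mul, Matrix.SpecialLinearGroup.coe_inv]
    simp [coe_lowerTransvection, rotationMatrix, orderThreeMatrix, adjugate_fin_two_of]
  have rotation_mem := Subgroup.subset_closure
    (Set.mem_insert (rotationMatrix (ZMod p)) {orderThreeMatrix 0})
  have orderThree_mem := Subgroup.subset_closure
    (Set.mem_insert_of_mem (rotationMatrix (ZMod p)) (Set.mem_singleton (orderThreeMatrix 0)))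
  rw [eq_top_iff, ← closure_transvection_pair_eq_top (p := p) one_ne_zero one_ne_zero,
    Subgroup.closure_le]
  rintro _ (rfl | rfl)
  · exact upper ▸ mul_mem (inv_mem rotation_mem) orderThree_mem
  · exact lower ▸ mul_mem rotation_mem (inv_mem orderThree_mem)

variable (p) in
theorem exists_surjective_hom_PSL_zmod :
    ∃ f : G0 →* PSL(2, ZMod p), Function.Surjective f := by
  obtain ⟨f, hrotation, horderThree⟩ := exists_hom_PSL (trace_rotationMatrix (R := ZMod p))
    (trace_orderThreeMatrix 0)
  refine ⟨f, MonoidHom.range_eq_top.mp ?_⟩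
  rw [MonoidHom.range_eq_map, ← closure_genTwo_genThree, MonoidHom.map_closure, Set.image_pair,
    hrotation, horderThree]
  exact closure_pair_mk_eq_top closure_rotationMatrix_orderThreeMatrix_eq_top

instance isPerfect_SL2_zmod_five : Group.IsPerfect SL(2, ZMod 5) :=
  ⟨Matrix.SL2.commutator_eq_top (a := 2) (by decide) (by decide)⟩

end Generation

section Infinite

theorem derivedSeries_two_semidirectProduct_eq_bot {N H : Type*} [CommGroup N] [CommGroup H]
    (φ : H →* MulAut N) : derivedSeries (N ⋊[φ] H) 2 = ⊥ := by
  apply derivedSeries_two_eq_bot SemidirectProduct.rightHom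
  rw [← SemidirectProduct.range_inl_eq_ker_rightHom]
  rintro _ ⟨m, rfl⟩ _ ⟨n, rfl⟩
  exact (Commute.all m n).map SemidirectProduct.inl

/-- The action of `ℂˣ` on `ℂ` by multiplication. -/
def complexScaling : ℂˣ →* MulAut (Multiplicative ℂ) :=
  (MulAutMultiplicative ℂ).symm.toMonoidHom.comp (DistribMulAction.toAddAut ℂˣ ℂ)

/-- The affine group of the complex line: `⟨b, u⟩` stands for the map `z ↦ u * z + b`. -/
abbrev ComplexAffineGroup : Type := Multiplicative ℂ ⋊[complexScaling] ℂˣ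

theorem complexScaling_apply (u : ℂˣ) (z : Multiplicative ℂ) :
    complexScaling u z = Multiplicative.ofAdd ((u : ℂ) * Multiplicative.toAdd z) := rfl

theorem affine_cube_eq_one {u : ℂˣ} (hu : 1 + (u : ℂ) + (u : ℂ) ^ 2 = 0) :
    (⟨Multiplicative.ofAdd 1, u⟩ : ComplexAffineGroup) ^ 3 = 1 := by
  rw [pow_three]
  apply SemidirectProduct.ext
  · apply Multiplicative.toAdd.injective
    simp only [SemidirectProduct.mul_left, SemidirectProduct.one_left, complexScaling_apply,
      toAdd_mul, toAdd_ofAdd, toAdd_one]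
    linear_combination hu
  · apply Units.ext
    simp only [SemidirectProduct.mul_right, SemidirectProduct.one_right, Units.val_mul,
      Units.val_one]
    linear_combination ((u : ℂ) - 1) * hu

theorem affine_commutatorElement_eq_inl (u : ℂˣ) :
    ⁅(⟨1, -1⟩ : ComplexAffineGroup), (⟨Multiplicative.ofAdd 1, u⟩ : ComplexAffineGroup)⁆ =
      SemidirectProduct.inl (Multiplicative.ofAdd (-2)) := by
  rw [commutatorElement_def, mul_inv_eq_iff_eq_mul, mul_inv_eq_iff_eq_mul]
  apply SemidirectProduct.ext
  · apply Multiplicative.toAdd.injective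
    norm_num [complexScaling_apply]
  · simp

theorem infinite_quotient_derivedSeries_two : Infinite (G0 ⧸ derivedSeries G0 2) := by
  obtain ⟨ω, hω⟩ : ∃ ω : ℂˣ, 1 + (ω : ℂ) + (ω : ℂ) ^ 2 = 0 := by
    have hprim := Complex.isPrimitiveRoot_exp 3 three_ne_zero
    refine ⟨(hprim.isUnit three_ne_zero).unit, ?_⟩
    simpa only [IsUnit.unit_spec, Finset.sum_range_succ, Finset.sum_range_zero, zero_add, pow_zero,
      pow_one] using hprim.geom_sum_eq_zero (by norm_num)
  have hsq : (⟨1, -1⟩ : ComplexAffineGroup) ^ 2 = 1 := by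
    ext <;> simp [sq]
  obtain ⟨f, hf_two, hf_three⟩ := exists_hom_genTwo_genThree hsq (affine_cube_eq_one hω)
  refine infinite_quotient_derivedSeries
    (derivedSeries_two_semidirectProduct_eq_bot complexScaling) f (g := ⁅genTwo, genThree⁆) ?_
  rw [map_commutatorElement, hf_two, hf_three, affine_commutatorElement_eq_inl,
    SemidirectProduct.inl_injective.isOfFinOrder_iff,
    isOfFinOrder_ofAdd_iff, isOfFinAddOrder_iff_eq_zero]
  norm_num

end Infinite

/-- for `G = C_2 ∗ C_3` and `H = PSL(2,5) × G/G''`, the group `H` is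
infinite, `H` is a homomorphic image of `G`, and some generating pair of `H` does
not lift to a generating pair of `G` along any homomorphism `G → H`. -/
theorem stmt4 :
    Infinite H0 ∧
    (∃ φ : G0 →* H0, Function.Surjective φ) ∧
    ∃ h1 h2 : H0, Subgroup.closure {h1, h2} = ⊤ ∧
      ∀ (θ : G0 →* H0) (g1 g2 : G0),
        Subgroup.closure {g1, g2} = ⊤ → (θ g1, θ g2) ≠ (h1, h2) := by
  refine ⟨?_, ?_, ?_⟩
  · have := infinite_quotient_derivedSeries_two
    exact Prod.infinite_of_right
  · obtain ⟨f, hf⟩ := exists_surjective_hom_PSL_zmod 5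
    exact ⟨_, surjective_prod_of_isPerfect_of_isSolvable hf (QuotientGroup.mk'_surjective _)⟩
  · let Y₁ : SL(2, ZMod 5) := upperTransvection 1
    let Y₂ : SL(2, ZMod 5) := lowerTransvection 2
    refine ⟨(Y₁, genTwo), (Y₂, genThree), closure_pair_prod_eq_top
      (closure_pair_mk_eq_top (closure_transvection_pair_eq_top (by decide) (by decide)))
      (closure_pair_mk_eq_top closure_genTwo_genThree), fun θ g₁ g₂ hg hθ ↦ ?_⟩
    obtain ⟨h₁, h₂⟩ := Prod.ext_iff.mp hθ
    have htrace : (⁅Y₁, Y₂⁆ : SL(2, ZMod 5)).1.trace = 1 := by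
      rw [trace_commutatorElement_transvection]
      decide
    obtain ⟨z, hz⟩ := exists_trace_commutatorElement_eq_sq_sub_one ((MonoidHom.fst _ _).comp θ) hg
      (congrArg Prod.fst h₁).symm (congrArg Prod.fst h₂).symm (by rw [htrace]; decide)
    rw [htrace] at hz
    revert z
    decide
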